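/- Let b > 0 be a constant, let f : ℂ → ℂ be holomorphic (differentiable on all of ℂ), set u(x,y) := 2 Re f(x + iy) and Ĥ(v,x,y) := x ∂_x u(x,y) − u(x,y). Then the Siklos metric g = (b²x²)^{−1} ĝ built from this Ĥ on U = {x > 0} is Einstein: its Ricci tensor satisfies R_{μν} = 3 b² g_{μν} at every point of U. -/

import Mathlib

noncomputable section

/-- Points of ℝ⁴, with coordinates (u,v,x,y) indexed by 0,1,2,3. -/
abbrev Pt : Type := Fin 4 → ℝ

/-- Partial derivative of a scalar function along the μ-th coordinate. -/
def pd (μ : Fin 4) (f : Pt → ℝ) (p : Pt) : ℝ :=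
  fderiv ℝ f p (Pi.single μ 1)

/-- `f` is independent of the μ-th coordinate. -/
def IndepCoord (μ : Fin 4) (f : Pt → ℝ) : Prop :=
  ∀ p t, f (Function.update p μ t) = f p

/-- Christoffel symbols Γ^λ_{μν} of a metric `g` with inverse `ginv`:
Γ^λ_{μν} = (1/2) Σ_ρ g^{λρ} (∂_μ g_{ρν} + ∂_ν g_{ρμ} − ∂_ρ g_{μν}). -/
def Christoffel (g ginv : Fin 4 → Fin 4 → Pt → ℝ) (l μ ν : Fin 4) (p : Pt) : ℝ :=
  (1/2) * ∑ ρ, ginv l ρ p * (pd μ (g ρ ν) p + pd ν (g ρ μ) p - pd ρ (g μ ν) p)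

/-- Ricci tensor:
R_{μν} = Σ_ρ ∂_ρ Γ^ρ_{μν} − Σ_ρ ∂_ν Γ^ρ_{ρμ}
        + Σ_{ρσ} (Γ^ρ_{ρσ} Γ^σ_{μν} − Γ^ρ_{νσ} Γ^σ_{ρμ}). -/
def RicciT (g ginv : Fin 4 → Fin 4 → Pt → ℝ) (μ ν : Fin 4) (p : Pt) : ℝ :=
  (∑ ρ, pd ρ (Christoffel g ginv ρ μ ν) p)
    - (∑ ρ, pd ν (Christoffel g ginv ρ ρ μ) p)
    + ∑ ρ, ∑ σ,
        (Christoffel g ginv ρ ρ σ p * Christoffel g ginv σ μ ν p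
          - Christoffel g ginv ρ ν σ p * Christoffel g ginv σ ρ μ p)

/-- Scalar curvature R = Σ_{μν} g^{μν} R_{μν}. -/
def ScalarCurv (g ginv : Fin 4 → Fin 4 → Pt → ℝ) (p : Pt) : ℝ :=
  ∑ μ, ∑ ν, ginv μ ν p * RicciT g ginv μ ν p

/-- The pp-wave metric ĝ: ĝ_{uv} = ĝ_{vu} = 1, ĝ_{vv} = Ĥ, ĝ_{xx} = ĝ_{yy} = −1. -/
def ppMetric (H : Pt → ℝ) (μ ν : Fin 4) (p : Pt) : ℝ :=
  if μ = 0 ∧ ν = 1 then 1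
  else if μ = 1 ∧ ν = 0 then 1
  else if μ = 1 ∧ ν = 1 then H p
  else if μ = 2 ∧ ν = 2 then -1
  else if μ = 3 ∧ ν = 3 then -1
  else 0

/-- The inverse pp-wave metric: ĝ^{uu} = −Ĥ, ĝ^{uv} = ĝ^{vu} = 1, ĝ^{xx} = ĝ^{yy} = −1. -/
def ppMetricInv (H : Pt → ℝ) (μ ν : Fin 4) (p : Pt) : ℝ :=
  if μ = 0 ∧ ν = 0 then -H p
  else if μ = 0 ∧ ν = 1 then 1
  else if μ = 1 ∧ ν = 0 then 1
  else if μ = 2 ∧ ν = 2 then -1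
  else if μ = 3 ∧ ν = 3 then -1
  else 0

/-- The covector k = dv. -/
def kvec (μ : Fin 4) : ℝ := if μ = 1 then 1 else 0

/-- The covector e = dx. -/
def evec (μ : Fin 4) : ℝ := if μ = 2 then 1 else 0

/-- The Siklos metric g = (b²x²)⁻¹ ĝ (meaningful on the domain U = {x > 0}). -/
def siklosMetric (b : ℝ) (H : Pt → ℝ) (μ ν : Fin 4) (p : Pt) : ℝ :=
  (b ^ 2 * (p 2) ^ 2)⁻¹ * ppMetric H μ ν p

/-- The inverse of the Siklos metric, g^{μν} = b²x² ĝ^{μν}. -/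
def siklosMetricInv (b : ℝ) (H : Pt → ℝ) (μ ν : Fin 4) (p : Pt) : ℝ :=
  b ^ 2 * (p 2) ^ 2 * ppMetricInv H μ ν p

/-- u(x,y) = 2 Re f(x + iy) for f : ℂ → ℂ, as a function on ℝ². -/
def uRe (f : ℂ → ℂ) (q : ℝ × ℝ) : ℝ :=
  2 * (f (q.1 + q.2 * Complex.I)).re

/-- The partial derivative ∂_x u on ℝ². -/
def uRex (f : ℂ → ℂ) (q : ℝ × ℝ) : ℝ :=
  fderiv ℝ (uRe f) q (1, 0)

/-- The Siklos profile Ĥ(v,x,y) = x ∂_x u(x,y) − u(x,y) (independent of u and v). -/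
def siklosProfile (f : ℂ → ℂ) (p : Pt) : ℝ :=
  p 2 * uRex f (p 2, p 3) - uRe f (p 2, p 3)

/-!
The conformal factor `(b²x²)⁻¹` changes the Christoffel symbols of the pp-wave metric `ĝ` by the
tensor `-C / x`, with `C` algebraic in `ĝ` and `e = dx`. Contracting, for any `C²` profile `H` with
`∂_u H = 0` and with `k = dv`,
`R_{μν} = 3 b² g_{μν} + (½ (H_xx + H_yy) - H_x / x) k_μ k_ν`,
so `g` is Einstein exactly when `x (H_xx + H_yy) = 2 H_x`. For `H = x u_x - u` with `u = 2 Re f`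
harmonic, `H_x = x u_xx`, `H_xx = u_xx + x u_xxx` and `H_yy = -u_yy + x u_xyy = u_xx - x u_xxx`.
-/

open Filter Topology

section PartialDerivatives

variable {F G : Pt → ℝ} {p : Pt}

theorem pd_congr (h : F =ᶠ[𝓝 p] G) (μ : Fin 4) : pd μ F p = pd μ G p := by
  rw [pd, h.fderiv_eq, pd]

theorem pd_const (c : ℝ) (μ : Fin 4) (p : Pt) : pd μ (fun _ => c) p = 0 := by
  simp [pd]

theorem pd_coord (μ ν : Fin 4) (p : Pt) : pd μ (fun q => q ν) p = if μ = ν then 1 else 0 := by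
  simp [pd, fderiv_apply, Pi.single_apply, eq_comm]

theorem pd_sub (hF : DifferentiableAt ℝ F p) (hG : DifferentiableAt ℝ G p) (μ : Fin 4) :
    pd μ (fun q => F q - G q) p = pd μ F p - pd μ G p := by
  simp [pd, fderiv_fun_sub hF hG]

theorem pd_mul (hF : DifferentiableAt ℝ F p) (hG : DifferentiableAt ℝ G p) (μ : Fin 4) :
    pd μ (fun q => F q * G q) p = pd μ F p * G p + F p * pd μ G p := by
  simp only [pd, fderiv_fun_mul hF hG, add_apply, smul_apply,
    smul_eq_mul]
  ring

theorem pd_const_mul (c : ℝ) (hF : DifferentiableAt ℝ F p) (μ : Fin 4) :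
    pd μ (fun q => c * F q) p = c * pd μ F p := by
  simp [pd, fderiv_const_mul hF]

theorem pd_inv (hF : DifferentiableAt ℝ F p) (hp : F p ≠ 0) (μ : Fin 4) :
    pd μ (fun q => (F q)⁻¹) p = -pd μ F p / F p ^ 2 := by
  have h := ((hasDerivAt_inv hp).comp_hasFDerivAt p hF.hasFDerivAt).fderiv
  simp only [Function.comp_def] at h
  simp only [pd, h, smul_apply, smul_eq_mul]
  ring

theorem pd_sum {A : Fin 4 → Pt → ℝ} (hA : ∀ ρ, DifferentiableAt ℝ (A ρ) p) (μ : Fin 4) :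
    pd μ (fun q => ∑ ρ, A ρ q) p = ∑ ρ, pd μ (A ρ) p := by
  simp [pd, fderiv_fun_sum fun ρ _ => hA ρ]

theorem differentiableAt_pd (hF : ContDiffAt ℝ 2 F p) (μ : Fin 4) :
    DifferentiableAt ℝ (pd μ F) p :=
  ((hF.fderiv_right (m := 1) (by norm_num)).differentiableAt (by norm_num)).clm_apply
    (differentiableAt_const _)

end PartialDerivatives

section IndepCoord

variable {μ : Fin 4} {F : Pt → ℝ}

theorem IndepCoord.apply_add_single (hF : IndepCoord μ F) (p : Pt) (t : ℝ) :
    F (p + Pi.single μ t) = F p := by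
  simpa [Pi.update_eq_sub_add_single, Pi.single_add, ← add_assoc] using hF p (p μ + t)

theorem IndepCoord.pd_eq_zero (hF : IndepCoord μ F) (p : Pt) : pd μ F p = 0 := by
  by_cases hd : DifferentiableAt ℝ F p
  · rw [pd, ← hd.lineDeriv_eq_fderiv, lineDeriv]
    simp [← Pi.single_smul, hF.apply_add_single]
  · simp [pd, fderiv_zero_of_not_differentiableAt hd]

theorem IndepCoord.pd_indepCoord (hF : IndepCoord μ F) (ν : Fin 4) : IndepCoord μ (pd ν F) := by
  intro p t
  have htranslate : Function.update p μ t = p + Pi.single μ (t - p μ) := by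
    rw [Pi.update_eq_sub_add_single, Pi.single_sub]
    abel
  simp only [pd, htranslate, ← fderiv_comp_add_right, hF.apply_add_single]

end IndepCoord

theorem christoffel_conformal {g ginv : Fin 4 → Fin 4 → Pt → ℝ} {c : Pt → ℝ} {p : Pt}
    (hg : ∀ μ ν, DifferentiableAt ℝ (g μ ν) p) (hc : DifferentiableAt ℝ c p) (hcp : c p ≠ 0)
    (hinv : ∀ μ ν, ∑ ρ, ginv μ ρ p * g ρ ν p = if μ = ν then 1 else 0) (l μ ν : Fin 4) :
    Christoffel (fun i j q => c q * g i j q) (fun i j q => (c q)⁻¹ * ginv i j q) l μ ν p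
      = Christoffel g ginv l μ ν p
        + (2 * c p)⁻¹ * ((if l = ν then 1 else 0) * pd μ c p + (if l = μ then 1 else 0) * pd ν c p
          - g μ ν p * ∑ ρ, ginv l ρ p * pd ρ c p) := by
  simp only [Christoffel, pd_mul hc (hg _ _), ← hinv, Finset.mul_sum, Finset.sum_mul,
    ← Finset.sum_add_distrib, ← Finset.sum_sub_distrib]
  refine Finset.sum_congr rfl fun ρ _ => ?_
  field_simp
  ring

section PpWave

variable {H : Pt → ℝ} {p : Pt}

theorem sum_ppMetricInv_mul_ppMetric (H : Pt → ℝ) (p : Pt) (μ ν : Fin 4) :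
    ∑ ρ, ppMetricInv H μ ρ p * ppMetric H ρ ν p = if μ = ν then 1 else 0 := by
  fin_cases μ <;> fin_cases ν <;> simp [Fin.sum_univ_four, ppMetric, ppMetricInv]

theorem differentiableAt_ppMetric (hH : DifferentiableAt ℝ H p) (μ ν : Fin 4) :
    DifferentiableAt ℝ (ppMetric H μ ν) p := by
  unfold ppMetric
  split_ifs <;> fun_prop

theorem pd_ppMetric (H : Pt → ℝ) (p : Pt) (ρ μ ν : Fin 4) :
    pd ρ (ppMetric H μ ν) p = pd ρ H p * kvec μ * kvec ν := by
  unfold ppMetric kvec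
  fin_cases μ <;> fin_cases ν <;> simp [pd_const]

/-- The Christoffel symbols `Γ̂^λ_{μν}` of the pp-wave metric with profile `H`, written through
`k = dv` and the partial derivatives of `H`; the formula assumes `∂_u H = 0`. -/
def ppChristoffel (H : Pt → ℝ) (l μ ν : Fin 4) (p : Pt) : ℝ :=
  match l with
  | 0 => 1 / 2 * (pd μ H p * kvec ν + kvec μ * pd ν H p - pd 1 H p * kvec μ * kvec ν)
  | 1 => 0
  | 2 => 1 / 2 * kvec μ * kvec ν * pd 2 H p
  | 3 => 1 / 2 * kvec μ * kvec ν * pd 3 H p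

theorem christoffel_ppMetric (hu : IndepCoord 0 H) (l μ ν : Fin 4) (p : Pt) :
    Christoffel (ppMetric H) (ppMetricInv H) l μ ν p = ppChristoffel H l μ ν p := by
  simp only [Christoffel, pd_ppMetric]
  fin_cases l <;> simp [Fin.sum_univ_four, ppMetricInv, ppChristoffel, kvec, hu.pd_eq_zero]

theorem differentiableAt_ppChristoffel (hH : ContDiffAt ℝ 2 H p) (l μ ν : Fin 4) :
    DifferentiableAt ℝ (ppChristoffel H l μ ν) p := by
  have hd (i : Fin 4) : DifferentiableAt ℝ (pd i H) p := differentiableAt_pd hH i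
  unfold ppChristoffel
  fin_cases l <;> fun_prop

theorem sum_pd_ppChristoffel (hu : IndepCoord 0 H) (hH : ContDiffAt ℝ 2 H p) (μ ν : Fin 4) :
    ∑ ρ, pd ρ (ppChristoffel H ρ μ ν) p
      = 1 / 2 * (pd 2 (pd 2 H) p + pd 3 (pd 3 H) p) * kvec μ * kvec ν := by
  have h0 : IndepCoord 0 (ppChristoffel H 0 μ ν) := fun q t => by
    simp only [ppChristoffel, hu.pd_indepCoord _ q t]
  have h1 : pd 1 (ppChristoffel H 1 μ ν) p = 0 := pd_const 0 1 p
  have h2 : pd 2 (ppChristoffel H 2 μ ν) p = 1 / 2 * kvec μ * kvec ν * pd 2 (pd 2 H) p :=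
    pd_const_mul _ (differentiableAt_pd hH 2) 2
  have h3 : pd 3 (ppChristoffel H 3 μ ν) p = 1 / 2 * kvec μ * kvec ν * pd 3 (pd 3 H) p :=
    pd_const_mul _ (differentiableAt_pd hH 3) 3
  rw [Fin.sum_univ_four, h0.pd_eq_zero, h1, h2, h3]
  ring

theorem sum_ppChristoffel_trace (hu : IndepCoord 0 H) (μ : Fin 4) (p : Pt) :
    ∑ ρ, ppChristoffel H ρ ρ μ p = 0 := by
  simp [Fin.sum_univ_four, ppChristoffel, kvec, hu.pd_eq_zero]

theorem sum_ppChristoffel_mul (hu : IndepCoord 0 H) (μ ν : Fin 4) (p : Pt) :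
    ∑ ρ, ∑ σ, ppChristoffel H ρ ν σ p * ppChristoffel H σ ρ μ p = 0 := by
  simp [Fin.sum_univ_four, ppChristoffel, kvec, hu.pd_eq_zero]

end PpWave

section Siklos

variable {b : ℝ} {H : Pt → ℝ} {p : Pt}

/-- The tensor `C^λ_{μν} = δ^λ_μ e_ν + δ^λ_ν e_μ + δ^λ_x ĝ_{μν}`, where `e = dx`: the conformal
factor of the Siklos metric changes the Christoffel symbols of `ĝ` by `-C / x`. -/
def conformalShift (H : Pt → ℝ) (l μ ν : Fin 4) (p : Pt) : ℝ :=
  (if l = μ then 1 else 0) * evec ν + (if l = ν then 1 else 0) * evec μ + evec l * ppMetric H μ ν p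

/-- The Christoffel symbols `Γ^λ_{μν} = Γ̂^λ_{μν} - C^λ_{μν} / x` of the Siklos metric. The factor
`b` cancels; as in `ppChristoffel`, the formula assumes `∂_u H = 0`. -/
def siklosChristoffel (H : Pt → ℝ) (l μ ν : Fin 4) (p : Pt) : ℝ :=
  ppChristoffel H l μ ν p - (p 2)⁻¹ * conformalShift H l μ ν p

theorem sum_evec_mul (F : Fin 4 → ℝ) : ∑ ρ, evec ρ * F ρ = F 2 := by
  simp [evec]

theorem differentiableAt_siklosFactor (hb : b ≠ 0) (hx : p 2 ≠ 0) :
    DifferentiableAt ℝ (fun q : Pt => (b ^ 2 * q 2 ^ 2)⁻¹) p := by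
  have : b ^ 2 * p 2 ^ 2 ≠ 0 := by positivity
  fun_prop (disch := assumption)

theorem pd_siklosFactor (hb : b ≠ 0) (hx : p 2 ≠ 0) (μ : Fin 4) :
    pd μ (fun q => (b ^ 2 * q 2 ^ 2)⁻¹) p = -2 * (b ^ 2 * p 2 ^ 2)⁻¹ * (p 2)⁻¹ * evec μ := by
  have hdenom : pd μ (fun q => b ^ 2 * q 2 ^ 2) p = 2 * b ^ 2 * p 2 * evec μ := by
    simp only [pow_two]
    rw [pd_const_mul _ (by fun_prop), pd_mul (by fun_prop) (by fun_prop), pd_coord, evec]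
    ring
  rw [pd_inv (by fun_prop) (by positivity), hdenom]
  field_simp

theorem christoffel_siklosMetric (hb : b ≠ 0) (hu : IndepCoord 0 H) (hH : DifferentiableAt ℝ H p)
    (hx : p 2 ≠ 0) (l μ ν : Fin 4) :
    Christoffel (siklosMetric b H) (siklosMetricInv b H) l μ ν p
      = siklosChristoffel H l μ ν p := by
  have hinv : siklosMetricInv b H
      = fun i j q => ((b ^ 2 * q 2 ^ 2)⁻¹)⁻¹ * ppMetricInv H i j q := by
    simp only [inv_inv]; rfl
  have hraise : ∑ ρ, ppMetricInv H l ρ p * evec ρ = -evec l := by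
    fin_cases l <;> simp [ppMetricInv, evec]
  have hsum : ∑ ρ, ppMetricInv H l ρ p * pd ρ (fun q => (b ^ 2 * q 2 ^ 2)⁻¹) p
      = -2 * (b ^ 2 * p 2 ^ 2)⁻¹ * (p 2)⁻¹ * -evec l := by
    rw [← hraise, Finset.mul_sum]
    exact Finset.sum_congr rfl fun ρ _ => by rw [pd_siklosFactor hb hx]; ring
  rw [hinv]
  refine (christoffel_conformal (differentiableAt_ppMetric hH) (differentiableAt_siklosFactor hb hx)
    (by positivity) (sum_ppMetricInv_mul_ppMetric H p) l μ ν).trans ?_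
  rw [christoffel_ppMetric hu, hsum, pd_siklosFactor hb hx, pd_siklosFactor hb hx,
    siklosChristoffel, conformalShift]
  field_simp
  ring

theorem differentiableAt_conformalShift (hH : DifferentiableAt ℝ H p) (l μ ν : Fin 4) :
    DifferentiableAt ℝ (conformalShift H l μ ν) p := by
  have hg : DifferentiableAt ℝ (ppMetric H μ ν) p := differentiableAt_ppMetric hH μ ν
  unfold conformalShift
  fun_prop

theorem sum_conformalShift_trace (H : Pt → ℝ) (μ : Fin 4) (p : Pt) :
    ∑ ρ, conformalShift H ρ ρ μ p = 4 * evec μ := by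
  have hmetric : ppMetric H 2 μ p = -evec μ := by
    fin_cases μ <;> simp [ppMetric, evec]
  simp only [conformalShift, Finset.sum_add_distrib, sum_evec_mul, hmetric]
  simp

theorem sum_conformalShift_mul (H : Pt → ℝ) (μ ν : Fin 4) (p : Pt) :
    ∑ ρ, ∑ σ, conformalShift H ρ ν σ p * conformalShift H σ ρ μ p
      = 6 * evec μ * evec ν + 2 * ppMetric H μ ν p := by
  fin_cases μ <;> fin_cases ν <;>
    simp [Fin.sum_univ_four, conformalShift, ppMetric, evec] <;> ring

theorem sum_ppChristoffel_mul_conformalShift (hu : IndepCoord 0 H) (μ ν : Fin 4) (p : Pt) :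
    ∑ ρ, ∑ σ, (ppChristoffel H ρ ν σ p * conformalShift H σ ρ μ p
        + conformalShift H ρ ν σ p * ppChristoffel H σ ρ μ p)
      = 2 * pd 2 H p * kvec μ * kvec ν := by
  fin_cases μ <;> fin_cases ν <;>
    simp [Fin.sum_univ_four, ppChristoffel, conformalShift, ppMetric, kvec, evec,
      hu.pd_eq_zero]
  ring

theorem pd_conformalShift (hH : DifferentiableAt ℝ H p) (ρ l μ ν : Fin 4) :
    pd ρ (conformalShift H l μ ν) p = evec l * (pd ρ H p * kvec μ * kvec ν) := by
  rw [← pd_ppMetric, ← pd_const_mul _ (differentiableAt_ppMetric hH μ ν)]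
  exact DFunLike.congr_fun (fderiv_const_add _) (Pi.single ρ 1)

theorem sum_pd_inv_mul_conformalShift (hH : DifferentiableAt ℝ H p) (hx : p 2 ≠ 0) (μ ν : Fin 4) :
    ∑ ρ, pd ρ (fun q => (q 2)⁻¹ * conformalShift H ρ μ ν q) p
      = (p 2)⁻¹ * pd 2 H p * kvec μ * kvec ν
        - (p 2 ^ 2)⁻¹ * (2 * evec μ * evec ν + ppMetric H μ ν p) := by
  have hterm (ρ : Fin 4) : pd ρ (fun q => (q 2)⁻¹ * conformalShift H ρ μ ν q) p
      = evec ρ * ((p 2)⁻¹ * pd ρ H p * kvec μ * kvec ν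
        - (p 2 ^ 2)⁻¹ * conformalShift H ρ μ ν p) := by
    rw [pd_mul (by fun_prop (disch := assumption)) (differentiableAt_conformalShift hH ρ μ ν),
      pd_inv (by fun_prop) hx, pd_coord, pd_conformalShift hH, ← evec]
    ring
  simp_rw [hterm, sum_evec_mul, conformalShift]
  simp only [evec, if_true, eq_comm (a := (2 : Fin 4))]
  ring

theorem differentiableAt_inv_mul_conformalShift (hH : DifferentiableAt ℝ H p) (hx : p 2 ≠ 0)
    (l μ ν : Fin 4) : DifferentiableAt ℝ (fun q => (q 2)⁻¹ * conformalShift H l μ ν q) p := by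
  have hC : DifferentiableAt ℝ (conformalShift H l μ ν) p :=
    differentiableAt_conformalShift hH l μ ν
  fun_prop (disch := assumption)

theorem differentiableAt_siklosChristoffel (hH : ContDiffAt ℝ 2 H p) (hx : p 2 ≠ 0)
    (l μ ν : Fin 4) : DifferentiableAt ℝ (siklosChristoffel H l μ ν) p :=
  (differentiableAt_ppChristoffel hH l μ ν).sub
    (differentiableAt_inv_mul_conformalShift (hH.differentiableAt (by norm_num)) hx l μ ν)

theorem sum_pd_siklosChristoffel (hu : IndepCoord 0 H) (hH : ContDiffAt ℝ 2 H p) (hx : p 2 ≠ 0)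
    (μ ν : Fin 4) :
    ∑ ρ, pd ρ (siklosChristoffel H ρ μ ν) p
      = (1 / 2 * (pd 2 (pd 2 H) p + pd 3 (pd 3 H) p) - (p 2)⁻¹ * pd 2 H p) * kvec μ * kvec ν
        + (p 2 ^ 2)⁻¹ * (2 * evec μ * evec ν + ppMetric H μ ν p) := by
  have hd : DifferentiableAt ℝ H p := hH.differentiableAt (by norm_num)
  have hterm (ρ : Fin 4) : pd ρ (siklosChristoffel H ρ μ ν) p
      = pd ρ (ppChristoffel H ρ μ ν) p
        - pd ρ (fun q => (q 2)⁻¹ * conformalShift H ρ μ ν q) p :=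
    pd_sub (differentiableAt_ppChristoffel hH ρ μ ν)
      (differentiableAt_inv_mul_conformalShift hd hx ρ μ ν) ρ
  simp only [hterm, Finset.sum_sub_distrib]
  rw [sum_pd_ppChristoffel hu hH, sum_pd_inv_mul_conformalShift hd hx]
  ring

theorem sum_siklosChristoffel_trace (hu : IndepCoord 0 H) (μ : Fin 4) (p : Pt) :
    ∑ ρ, siklosChristoffel H ρ ρ μ p = -4 * (p 2)⁻¹ * evec μ := by
  simp only [siklosChristoffel, Finset.sum_sub_distrib, ← Finset.mul_sum]
  rw [sum_ppChristoffel_trace hu, sum_conformalShift_trace]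
  ring

theorem sum_siklosChristoffel_mul (hu : IndepCoord 0 H) (μ ν : Fin 4) (p : Pt) :
    ∑ ρ, ∑ σ, siklosChristoffel H ρ ν σ p * siklosChristoffel H σ ρ μ p
      = (p 2 ^ 2)⁻¹ * (6 * evec μ * evec ν + 2 * ppMetric H μ ν p)
        - 2 * (p 2)⁻¹ * pd 2 H p * kvec μ * kvec ν := by
  calc
    _ = ∑ ρ, ∑ σ, ppChristoffel H ρ ν σ p * ppChristoffel H σ ρ μ p
        - (p 2)⁻¹ * ∑ ρ, ∑ σ, (ppChristoffel H ρ ν σ p * conformalShift H σ ρ μ p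
          + conformalShift H ρ ν σ p * ppChristoffel H σ ρ μ p)
        + (p 2 ^ 2)⁻¹ * ∑ ρ, ∑ σ, conformalShift H ρ ν σ p * conformalShift H σ ρ μ p := by
      simp only [siklosChristoffel, Finset.mul_sum, ← Finset.sum_sub_distrib,
        ← Finset.sum_add_distrib]
      exact Finset.sum_congr rfl fun ρ _ => Finset.sum_congr rfl fun σ _ => by ring
    _ = _ := by
      rw [sum_ppChristoffel_mul hu, sum_ppChristoffel_mul_conformalShift hu,
        sum_conformalShift_mul]
      ring

theorem sum_pd_siklosChristoffel_trace (hu : IndepCoord 0 H) (hH : ContDiffAt ℝ 2 H p)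
    (hx : p 2 ≠ 0) (μ ν : Fin 4) :
    ∑ ρ, pd ν (siklosChristoffel H ρ ρ μ) p = 4 * (p 2 ^ 2)⁻¹ * evec μ * evec ν := by
  rw [← pd_sum fun ρ => differentiableAt_siklosChristoffel hH hx ρ ρ μ]
  simp only [sum_siklosChristoffel_trace hu, mul_right_comm _ _ (evec μ)]
  rw [pd_const_mul _ (by fun_prop (disch := assumption)), pd_inv (by fun_prop) hx, pd_coord, ← evec]
  ring

theorem sum_siklosChristoffel_trace_mul (hu : IndepCoord 0 H) (μ ν : Fin 4) (p : Pt) :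
    ∑ ρ, ∑ σ, siklosChristoffel H ρ ρ σ p * siklosChristoffel H σ μ ν p
      = 4 * (p 2 ^ 2)⁻¹ * (2 * evec μ * evec ν + ppMetric H μ ν p)
        - 2 * (p 2)⁻¹ * pd 2 H p * kvec μ * kvec ν := by
  have hcontract : ∑ ρ, ∑ σ, siklosChristoffel H ρ ρ σ p * siklosChristoffel H σ μ ν p
      = ∑ σ, evec σ * (-4 * (p 2)⁻¹ * siklosChristoffel H σ μ ν p) := by
    rw [Finset.sum_comm]
    refine Finset.sum_congr rfl fun σ _ => ?_
    rw [← Finset.sum_mul, sum_siklosChristoffel_trace hu]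
    ring
  rw [hcontract, sum_evec_mul, siklosChristoffel, conformalShift]
  simp only [ppChristoffel, evec, if_true, eq_comm (a := (2 : Fin 4))]
  ring

theorem christoffel_siklosMetric_eventuallyEq (hb : b ≠ 0) (hu : IndepCoord 0 H)
    (hH : ContDiffAt ℝ 2 H p) (hx : p 2 ≠ 0) (l μ ν : Fin 4) :
    Christoffel (siklosMetric b H) (siklosMetricInv b H) l μ ν
      =ᶠ[𝓝 p] siklosChristoffel H l μ ν := by
  filter_upwards [hH.eventually (by simp), (continuous_apply 2).continuousAt.eventually_ne hx]
    with q hHq hxq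
  exact christoffel_siklosMetric hb hu (hHq.differentiableAt (by norm_num)) hxq l μ ν

theorem ricciT_siklosMetric (hb : b ≠ 0) (hu : IndepCoord 0 H) (hH : ContDiffAt ℝ 2 H p)
    (hx : p 2 ≠ 0) (μ ν : Fin 4) :
    RicciT (siklosMetric b H) (siklosMetricInv b H) μ ν p
      = 3 * b ^ 2 * siklosMetric b H μ ν p
        + (1 / 2 * (pd 2 (pd 2 H) p + pd 3 (pd 3 H) p) - (p 2)⁻¹ * pd 2 H p)
          * kvec μ * kvec ν := by
  have hΓ (l i j : Fin 4) := christoffel_siklosMetric_eventuallyEq hb hu hH hx l i j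
  simp only [RicciT, fun ρ l i j => pd_congr (hΓ l i j) ρ, fun l i j => (hΓ l i j).eq_of_nhds,
    Finset.sum_sub_distrib]
  rw [sum_pd_siklosChristoffel hu hH hx, sum_pd_siklosChristoffel_trace hu hH hx,
    sum_siklosChristoffel_trace_mul hu, sum_siklosChristoffel_mul hu, siklosMetric]
  field_simp
  ring

end Siklos

section HolomorphicProfile

variable {f g h : ℂ → ℂ} {p : Pt}

/-- The complex coordinate `x + iy` of a point of ℝ⁴. -/
def complexCoord (p : Pt) : ℂ := p 2 + p 3 * Complex.I

/-- The function `2 Re f(x + iy)` on ℝ⁴, i.e. `uRe f` pulled back along `(u, v, x, y) ↦ (x, y)`. -/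
def uLift (f : ℂ → ℂ) (p : Pt) : ℝ := uRe f (p 2, p 3)

theorem contDiff_complexCoord {n : WithTop ℕ∞} : ContDiff ℝ n complexCoord :=
  (Complex.ofRealCLM.contDiff.comp (contDiff_apply ℝ ℝ 2)).add
    ((Complex.ofRealCLM.contDiff.comp (contDiff_apply ℝ ℝ 3)).mul contDiff_const)

theorem eventually_analyticAt_complexCoord (hf : AnalyticAt ℂ f (complexCoord p)) :
    ∀ᶠ q in 𝓝 p, AnalyticAt ℂ f (complexCoord q) :=
  (contDiff_complexCoord (n := 0)).continuous.continuousAt.eventually hf.eventually_analyticAt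

theorem hasFDerivAt_uRe {q : ℝ × ℝ} (hf : DifferentiableAt ℂ f (q.1 + q.2 * Complex.I)) :
    HasFDerivAt (uRe f)
      (uRe (deriv f) q • ContinuousLinearMap.fst ℝ ℝ ℝ
        + uRe (fun z => Complex.I * deriv f z) q • ContinuousLinearMap.snd ℝ ℝ ℝ) q := by
  let L : ℝ × ℝ →L[ℝ] ℂ := Complex.equivRealProdCLM.symm
  have hL (q : ℝ × ℝ) : L q = q.1 + q.2 * Complex.I := Complex.equivRealProd_symm_apply q
  rw [← hL] at hf
  have hcomp : HasFDerivAt (fun q => 2 * (f (L q)).re) _ q :=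
    (Complex.reCLM.hasFDerivAt.comp q
      (hf.hasDerivAt.complexToReal_fderiv.comp q L.hasFDerivAt)).const_mul 2
  simp only [hL] at hcomp
  refine hcomp.congr_fderiv ?_
  ext <;> simp [hL, uRe]

theorem uRex_eq_uRe_deriv {q : ℝ × ℝ} (hf : DifferentiableAt ℂ f (q.1 + q.2 * Complex.I)) :
    uRex f q = uRe (deriv f) q := by
  simp [uRex, (hasFDerivAt_uRe hf).fderiv]

theorem hasFDerivAt_uLift (hf : DifferentiableAt ℂ f (complexCoord p)) :
    HasFDerivAt (uLift f)
      (uLift (deriv f) p • ContinuousLinearMap.proj (R := ℝ) (φ := fun _ => ℝ) 2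
        + uLift (fun z => Complex.I * deriv f z) p
          • ContinuousLinearMap.proj (R := ℝ) (φ := fun _ => ℝ) 3) p := by
  exact HasFDerivAt.comp (f := fun q : Pt => (q 2, q 3)) p (hasFDerivAt_uRe (q := (p 2, p 3)) hf)
    ((hasFDerivAt_apply 2 p).prodMk (hasFDerivAt_apply 3 p))

theorem differentiableAt_uLift (hf : DifferentiableAt ℂ f (complexCoord p)) :
    DifferentiableAt ℝ (uLift f) p :=
  (hasFDerivAt_uLift hf).differentiableAt

theorem pd_two_uLift (hf : DifferentiableAt ℂ f (complexCoord p)) :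
    pd 2 (uLift f) p = uLift (deriv f) p := by
  simp [pd, (hasFDerivAt_uLift hf).fderiv]

theorem pd_three_uLift (hf : DifferentiableAt ℂ f (complexCoord p)) :
    pd 3 (uLift f) p = uLift (fun z => Complex.I * deriv f z) p := by
  simp [pd, (hasFDerivAt_uLift hf).fderiv]

theorem contDiffAt_uLift (hf : AnalyticAt ℂ f (complexCoord p)) {n : WithTop ℕ∞} :
    ContDiffAt ℝ n (uLift f) p :=
  contDiffAt_const.mul (Complex.reCLM.contDiff.contDiffAt.comp p
    ((hf.contDiffAt.restrict_scalars ℝ).comp p contDiff_complexCoord.contDiffAt))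

theorem pd_two_mul_uLift_sub (hg : DifferentiableAt ℂ g (complexCoord p))
    (hh : DifferentiableAt ℂ h (complexCoord p)) :
    pd 2 (fun q => q 2 * uLift g q - uLift h q) p
      = uLift g p + p 2 * uLift (deriv g) p - uLift (deriv h) p := by
  have hdg := differentiableAt_uLift hg
  rw [pd_sub (by fun_prop) (differentiableAt_uLift hh), pd_mul (by fun_prop) hdg, pd_coord,
    pd_two_uLift hg, pd_two_uLift hh, if_pos rfl, one_mul]

theorem pd_three_mul_uLift_sub (hg : DifferentiableAt ℂ g (complexCoord p))
    (hh : DifferentiableAt ℂ h (complexCoord p)) :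
    pd 3 (fun q => q 2 * uLift g q - uLift h q) p
      = p 2 * uLift (fun z => Complex.I * deriv g z) p
        - uLift (fun z => Complex.I * deriv h z) p := by
  have hdg := differentiableAt_uLift hg
  rw [pd_sub (by fun_prop) (differentiableAt_uLift hh), pd_mul (by fun_prop) hdg, pd_coord,
    pd_three_uLift hg, pd_three_uLift hh, if_neg (by decide), zero_mul, zero_add]

theorem siklosProfile_eventuallyEq (hf : AnalyticAt ℂ f (complexCoord p)) :
    siklosProfile f =ᶠ[𝓝 p] fun q => q 2 * uLift (deriv f) q - uLift f q := by
  filter_upwards [eventually_analyticAt_complexCoord hf] with q hq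
  rw [siklosProfile, uRex_eq_uRe_deriv hq.differentiableAt]
  rfl

theorem contDiffAt_siklosProfile (hf : AnalyticAt ℂ f (complexCoord p)) {n : WithTop ℕ∞} :
    ContDiffAt ℝ n (siklosProfile f) p :=
  (((contDiff_apply ℝ ℝ 2).contDiffAt.mul (contDiffAt_uLift hf.deriv)).sub
    (contDiffAt_uLift hf)).congr_of_eventuallyEq (siklosProfile_eventuallyEq hf)

theorem indepCoord_siklosProfile (f : ℂ → ℂ) : IndepCoord 0 (siklosProfile f) := fun p t => by
  simp [siklosProfile]

theorem pd_two_siklosProfile (hf : AnalyticAt ℂ f (complexCoord p)) :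
    pd 2 (siklosProfile f) p = p 2 * uLift (deriv (deriv f)) p := by
  rw [pd_congr (siklosProfile_eventuallyEq hf), pd_two_mul_uLift_sub hf.deriv.differentiableAt
    hf.differentiableAt]
  ring

theorem pd_three_siklosProfile (hf : AnalyticAt ℂ f (complexCoord p)) :
    pd 3 (siklosProfile f) p = p 2 * uLift (fun z => Complex.I * deriv (deriv f) z) p
      - uLift (fun z => Complex.I * deriv f z) p := by
  rw [pd_congr (siklosProfile_eventuallyEq hf), pd_three_mul_uLift_sub hf.deriv.differentiableAt
    hf.differentiableAt]

theorem pd_two_pd_two_siklosProfile (hf : AnalyticAt ℂ f (complexCoord p)) :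
    pd 2 (pd 2 (siklosProfile f)) p
      = uLift (deriv (deriv f)) p + p 2 * uLift (deriv (deriv (deriv f))) p := by
  have hx : pd 2 (siklosProfile f) =ᶠ[𝓝 p] fun q => q 2 * uLift (deriv (deriv f)) q :=
    (eventually_analyticAt_complexCoord hf).mono fun _ hq => pd_two_siklosProfile hq
  have hd : DifferentiableAt ℂ (deriv (deriv f)) (complexCoord p) := hf.deriv.deriv.differentiableAt
  rw [pd_congr hx, pd_mul (by fun_prop) (differentiableAt_uLift hd), pd_coord, pd_two_uLift hd,
    if_pos rfl, one_mul]

theorem uLift_I_mul_I_mul (f : ℂ → ℂ) (p : Pt) :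
    uLift (fun z => Complex.I * (Complex.I * f z)) p = -uLift f p := by
  simp [uLift, uRe, ← mul_assoc]

theorem pd_three_pd_three_siklosProfile (hf : AnalyticAt ℂ f (complexCoord p)) :
    pd 3 (pd 3 (siklosProfile f)) p
      = uLift (deriv (deriv f)) p - p 2 * uLift (deriv (deriv (deriv f))) p := by
  have hy : pd 3 (siklosProfile f) =ᶠ[𝓝 p] fun q =>
      q 2 * uLift (fun z => Complex.I * deriv (deriv f) z) q
        - uLift (fun z => Complex.I * deriv f z) q :=
    (eventually_analyticAt_complexCoord hf).mono fun _ hq => pd_three_siklosProfile hq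
  rw [pd_congr hy, pd_three_mul_uLift_sub (hf.deriv.deriv.differentiableAt.const_mul _)
    (hf.deriv.differentiableAt.const_mul _)]
  simp only [deriv_const_mul_field', uLift_I_mul_I_mul]
  ring

theorem mul_laplacian_siklosProfile (hf : AnalyticAt ℂ f (complexCoord p)) :
    p 2 * (pd 2 (pd 2 (siklosProfile f)) p + pd 3 (pd 3 (siklosProfile f)) p)
      = 2 * pd 2 (siklosProfile f) p := by
  rw [pd_two_pd_two_siklosProfile hf, pd_three_pd_three_siklosProfile hf, pd_two_siklosProfile hf]
  ring

end HolomorphicProfile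

theorem siklos_ansatz_is_einstein_general {b : ℝ} (hb : b ≠ 0) {f : ℂ → ℂ} {p : Pt}
    (hf : AnalyticAt ℂ f (p 2 + p 3 * Complex.I)) (hx : p 2 ≠ 0) (μ ν : Fin 4) :
    RicciT (siklosMetric b (siklosProfile f)) (siklosMetricInv b (siklosProfile f)) μ ν p
      = 3 * b ^ 2 * siklosMetric b (siklosProfile f) μ ν p := by
  have hobstruction : 1 / 2 * (pd 2 (pd 2 (siklosProfile f)) p + pd 3 (pd 3 (siklosProfile f)) p)
      - (p 2)⁻¹ * pd 2 (siklosProfile f) p = 0 := by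
    have hsiklos := mul_laplacian_siklosProfile hf
    field_simp
    linarith
  rw [ricciT_siklosMetric hb (indepCoord_siklosProfile f) (contDiffAt_siklosProfile hf) hx,
    hobstruction, zero_mul, zero_mul, add_zero]

/-- for f holomorphic, the Siklos metric g = (b²x²)⁻¹ ĝ built from
Ĥ = x u_x − u, u = 2 Re f(x+iy), is Einstein on U = {x > 0}: R_{μν} = 3 b² g_{μν}. -/
theorem siklos_ansatz_is_einstein (b : ℝ) (hb : 0 < b)
    (f : ℂ → ℂ) (hf : Differentiable ℂ f) :
    ∀ p : Pt, 0 < p 2 → ∀ μ ν : Fin 4,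
      RicciT (siklosMetric b (siklosProfile f)) (siklosMetricInv b (siklosProfile f)) μ ν p
        = 3 * b ^ 2 * siklosMetric b (siklosProfile f) μ ν p :=
  fun p hx => siklos_ansatz_is_einstein_general hb.ne'
    (hf.analyticAt (p 2 + p 3 * Complex.I)) hx.ne'
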